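/- There is a constant c > 0 such that for all dimensions d ∈ ℕ and all ε ∈ (0, 1/2), the information complexity of L₂-approximation on the class F_d^log satisfies n(ε, F_d^log, L₂) ≤ c · d · ε^{-3} · log³(ε^{-1}); that is, there exist n ≤ c · d · ε^{-3} · log³(ε^{-1}), points x₁,…,xₙ ∈ [0,1]^d and a map φ : ℂⁿ → L₂([0,1]^d) such that ‖f − φ(f(x₁),…,f(xₙ))‖_{L₂} ≤ ε for every f ∈ F_d^log. -/

import Mathlib

open MeasureTheory Real Finset

noncomputable section

/-- The unit cube `[0,1]^d`. -/
def cube (d : ℕ) : Set (Fin d → ℝ) := Set.univ.pi fun _ => Set.Icc 0 1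

/-- The trigonometric character `e^{2πi⟨k,x⟩}`. -/
def eK (d : ℕ) (k : Fin d → ℤ) (x : Fin d → ℝ) : ℂ :=
  Complex.exp (2 * Real.pi * Complex.I * ∑ i, (k i : ℂ) * (x i : ℂ))

/-- The Fourier coefficient `f̂(k) = ∫_{[0,1]^d} f(x) e^{-2πi⟨k,x⟩} dx`. -/
def fCoeff (d : ℕ) (f : (Fin d → ℝ) → ℂ) (k : Fin d → ℤ) : ℂ :=
  ∫ x in cube d, f x * Complex.exp (-(2 * Real.pi * Complex.I) * ∑ i, (k i : ℂ) * (x i : ℂ))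

/-- `f` is 1-periodic in each coordinate. -/
def Periodic1 (d : ℕ) (f : (Fin d → ℝ) → ℂ) : Prop :=
  ∀ (x : Fin d → ℝ) (i : Fin d), f (Function.update x i (x i + 1)) = f x

/-- The weight `max(1, log ‖k‖_∞)`. -/
def logWeight (d : ℕ) (k : Fin d → ℤ) : ℝ :=
  max 1 (Real.log ((Finset.univ.sup fun i => (k i).natAbs : ℕ) : ℝ))

/-- The class `F_d^log` of continuous 1-periodic functions with
`∑_k |f̂(k)| max(1, log ‖k‖_∞) ≤ 1`. -/
def FdLog (d : ℕ) : Set ((Fin d → ℝ) → ℂ) :=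
  {f | Continuous f ∧ Periodic1 d f ∧
    Summable (fun k : Fin d → ℤ => ‖fCoeff d f k‖ * logWeight d k) ∧
    ∑' k : Fin d → ℤ, ‖fCoeff d f k‖ * logWeight d k ≤ 1}

/-!
Two members of `F_d^log` with the same samples differ by twice a member `h` that vanishes at the
sample points, so it suffices to find points such that every such `h` is small in `L₂`, and then to
recover `f` by any member of the class that interpolates it. Cutting the Fourier series of `h` at
`‖k‖_∞ ≤ exp (1/ε)` costs `ε` in the sup norm, because the discarded frequencies have weight at
least `1/ε`. What remains lies in the `ℓ₁`-ball of a dictionary of `N` characters with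
`log N ≲ d/ε`, and is at most `ε` at the sample points.

For such sums `T` one bounds the measure of the level set `{|T| ≥ t}` for dyadic `t`. By Maurey's
sampling argument an average of `m` dictionary elements approximates `T` up to `t`, off a set of
measure `exp (-c m t²)` for the uniform measure and for the empirical measure alike. There are only
`(2N)^m` averages, so a union bound shows that `n ≳ m log N / q` random points detect every level
set of measure at least `q`. A level `t` contributes `t² q` to the squared `L₂`-norm, so large
values need finer resolution `q` but shorter averages, `m ~ log (1/q) / t²`, and `m/q` stays of
order `ε⁻²` up to logarithms for every `t` between `ε` and `1`.
-/

section Maurey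

open ProbabilityTheory

variable {Ω ι : Type*} [MeasurableSpace Ω]

/-- The average of the members of the family `g` listed by `κ`, repetitions allowed: the
approximants of Maurey's empirical method. -/
def atomAverage {m : ℕ} (g : ι → Ω → ℝ) (κ : Fin m → ι) (y : Ω) : ℝ := (∑ j, g (κ j) y) / m

lemma measurable_atomAverage {m : ℕ} {g : ι → Ω → ℝ} (hg : ∀ i, Measurable (g i))
    (κ : Fin m → ι) : Measurable (atomAverage g κ) :=
  (Finset.measurable_fun_sum _ fun j _ => hg (κ j)).div_const _

lemma measure_pi_le_sum_sub_integral [MeasurableSpace ι] (ρ : Measure ι) [IsProbabilityMeasure ρ]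
    {h : ι → ℝ} (hm : Measurable h) (hb : ∀ i, |h i| ≤ 1) {t : ℝ} (ht : 0 ≤ t) (m : ℕ) :
    (Measure.pi fun _ : Fin m => ρ).real {κ | t ≤ ∑ j, (h (κ j) - ∫ i, h i ∂ρ)} ≤
      exp (-t ^ 2 / (2 * m)) := by
  have subG (j : Fin m) : HasSubgaussianMGF (fun κ : Fin m → ι => h (κ j) - ∫ i, h i ∂ρ) 1
      (Measure.pi fun _ => ρ) := by
    have hmap := (measurePreserving_eval (fun _ : Fin m => ρ) j).map_eq
    have hρ := hasSubgaussianMGF_of_mem_Icc (μ := ρ) hm.aemeasurable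
      (.of_forall fun i => abs_le.1 (hb i))
    norm_num at hρ
    exact HasSubgaussianMGF.of_map (measurable_pi_apply j).aemeasurable (by rwa [hmap])
  have indep : iIndepFun (fun (j : Fin m) (κ : Fin m → ι) => h (κ j) - ∫ i, h i ∂ρ)
      (Measure.pi fun _ => ρ) :=
    iIndepFun_pi (X := fun _ i => h i - ∫ i, h i ∂ρ) fun _ => (hm.sub_const _).aemeasurable
  simpa using HasSubgaussianMGF.measure_sum_ge_le_of_iIndepFun indep
    (s := univ) (fun j _ => subG j) ht

lemma measure_pi_le_abs_average_sub_integral [MeasurableSpace ι] (ρ : Measure ι)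
    [IsProbabilityMeasure ρ] {h : ι → ℝ} (hm : Measurable h) (hb : ∀ i, |h i| ≤ 1) {s : ℝ}
    (hs : 0 ≤ s) (m : ℕ) :
    (Measure.pi fun _ : Fin m => ρ).real {κ | s ≤ |(∑ j, h (κ j)) / m - ∫ i, h i ∂ρ|} ≤
      2 * exp (-(m * s ^ 2 / 2)) := by
  rcases m.eq_zero_or_pos with rfl | hm0
  · simpa using measureReal_le_one.trans one_le_two
  have hm' : (0 : ℝ) < m := by exact_mod_cast hm0
  have hexp : exp (-(m * s) ^ 2 / (2 * m)) = exp (-(m * s ^ 2 / 2)) := by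
    congr 1; field_simp
  have upper := measure_pi_le_sum_sub_integral ρ hm hb (mul_nonneg hm'.le hs) m
  have lower := measure_pi_le_sum_sub_integral ρ hm.neg (by simpa using hb)
    (mul_nonneg hm'.le hs) m
  rw [hexp] at upper lower
  have scale (κ : Fin m → ι) : ∑ j, (h (κ j) - ∫ i, h i ∂ρ) =
      m * ((∑ j, h (κ j)) / m - ∫ i, h i ∂ρ) := by
    simp [mul_sub, mul_div_cancel₀ _ hm'.ne']
  have scale_neg (κ : Fin m → ι) : ∑ j, ((-h) (κ j) - ∫ i, (-h) i ∂ρ) =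
      m * -((∑ j, h (κ j)) / m - ∫ i, h i ∂ρ) := by
    rw [mul_neg, ← scale, ← sum_neg_distrib]
    simp [integral_neg, neg_add_eq_sub]
  simp only [scale, mul_le_mul_iff_right₀ hm'] at upper
  simp only [scale_neg, mul_le_mul_iff_right₀ hm'] at lower
  simp only [le_abs, Set.ofPred_or]
  exact (measureReal_union_le _ _).trans ((add_le_add upper lower).trans_eq (two_mul _).symm)

/-- Maurey's empirical method: atoms drawn independently from `ρ` do the job on average. -/
lemma exists_atomAverage_close [MeasurableSpace ι] (ρ : Measure ι) [IsProbabilityMeasure ρ]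
    (ν : Measure Ω) [IsFiniteMeasure ν] {g : ι → Ω → ℝ} (hgm : Measurable (Function.uncurry g))
    (hg : ∀ i y, |g i y| ≤ 1) {s : ℝ} (hs : 0 ≤ s) (m : ℕ) :
    ∃ κ : Fin m → ι, ν.real {y | s ≤ |atomAverage g κ y - ∫ i, g i y ∂ρ|} ≤
      2 * exp (-(m * s ^ 2 / 2)) * ν.real Set.univ := by
  set P : Measure (Fin m → ι) := Measure.pi fun _ => ρ
  let bad : Set ((Fin m → ι) × Ω) := {z | s ≤ |atomAverage g z.1 z.2 - ∫ i, g i z.2 ∂ρ|}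
  have hbad : MeasurableSet bad := by
    have havg : Measurable fun z : (Fin m → ι) × Ω => atomAverage g z.1 z.2 :=
      (Finset.measurable_fun_sum _ fun j _ => hgm.comp
        (((measurable_pi_apply j).comp measurable_fst).prodMk measurable_snd)).div_const _
    have hint : Measurable fun z : (Fin m → ι) × Ω => ∫ i, g i z.2 ∂ρ :=
      (StronglyMeasurable.integral_prod_left (f := g) hgm.stronglyMeasurable).measurable.comp
        measurable_snd
    exact measurableSet_le measurable_const (havg.sub hint).abs
  obtain ⟨κ, hκ⟩ := exists_le_lintegral (μ := P) (f := fun κ => ν (Prod.mk κ ⁻¹' bad))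
    (measurable_measure_prodMk_left hbad).aemeasurable
  refine ⟨κ, ENNReal.toReal_le_of_le_ofReal (by positivity) ?_⟩
  calc ν (Prod.mk κ ⁻¹' bad) ≤ ∫⁻ y, P ((fun κ => (κ, y)) ⁻¹' bad) ∂ν := by
        rwa [← Measure.prod_apply hbad, Measure.prod_apply_symm hbad] at hκ
    _ ≤ ∫⁻ _, ENNReal.ofReal (2 * exp (-(m * s ^ 2 / 2))) ∂ν := by
        refine lintegral_mono fun y => ?_
        rw [← ofReal_measureReal]
        exact ENNReal.ofReal_le_ofReal (measure_pi_le_abs_average_sub_integral ρ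
          (hgm.comp measurable_prodMk_right) (fun i => hg i y) hs m)
    _ = ENNReal.ofReal (2 * exp (-(m * s ^ 2 / 2)) * ν.real Set.univ) := by
        rw [lintegral_const, ENNReal.ofReal_mul (by positivity) (q := ν.real _), ofReal_measureReal]

/-- The family `g` closed up under negation, so that the `ℓ₁`-ball of coefficients becomes a convex
hull. -/
def signedAtoms (g : ι → Ω → ℝ) (z : ι × ℤˣ) (y : Ω) : ℝ := z.2 * g z.1 y

variable [Fintype ι]

lemma exists_mem_stdSimplex_sum_signed_eq [Nonempty ι] {v : ι → ℝ} (hv : ∑ i, |v i| ≤ 1) :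
    ∃ w ∈ stdSimplex ℝ (ι × ℤˣ), ∀ h : ι → ℝ, ∑ z, w z * (z.2 * h z.1) = ∑ i, v i * h i := by
  let slack : ℝ := (1 - ∑ i, |v i|) / Fintype.card ι
  have hslack : 0 ≤ slack := div_nonneg (sub_nonneg.2 hv) (Nat.cast_nonneg _)
  refine ⟨fun z => (|v z.1| + z.2 * v z.1 + slack) / 2, ⟨fun z => ?_, ?_⟩, fun h => ?_⟩
  · rcases Int.units_eq_one_or z.2 with hz | hz <;> simp only [hz] <;> push_cast <;>
      linarith [neg_abs_le (v z.1), le_abs_self (v z.1)]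
  · have hN : (Fintype.card ι : ℝ) ≠ 0 := by simp
    calc _ = ∑ i, (|v i| + slack) := by
          simp only [Fintype.sum_prod_type, UnitsInt.univ]
          refine sum_congr rfl fun i _ => ?_
          rw [sum_pair (by decide)]
          push_cast; ring
      _ = 1 := by simp [sum_add_distrib, slack, mul_div_cancel₀ _ hN]
  · simp only [Fintype.sum_prod_type, UnitsInt.univ]
    refine sum_congr rfl fun i _ => ?_
    rw [sum_pair (by decide)]
    push_cast; ring

lemma exists_isProbabilityMeasure_integral_eq_sum [MeasurableSpace ι]
    [MeasurableSingletonClass ι] {w : ι → ℝ} (hw : w ∈ stdSimplex ℝ ι) :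
    ∃ ρ : Measure ι, IsProbabilityMeasure ρ ∧ ∀ h : ι → ℝ, ∫ i, h i ∂ρ = ∑ i, w i * h i := by
  let p : PMF ι := PMF.ofFintype (fun i => ENNReal.ofReal (w i)) (by
    rw [← ENNReal.ofReal_sum_of_nonneg fun i _ => hw.1 i, hw.2, ENNReal.ofReal_one])
  refine ⟨p.toMeasure, inferInstance, fun h => ?_⟩
  simp [PMF.integral_eq_sum, p, ENNReal.toReal_ofReal (hw.1 _)]

lemma exists_atomAverage_signedAtoms_close [Nonempty ι] (ν : Measure Ω) [IsFiniteMeasure ν]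
    {g : ι → Ω → ℝ} (hgm : ∀ i, Measurable (g i)) (hg : ∀ i y, |g i y| ≤ 1) {v : ι → ℝ}
    (hv : ∑ i, |v i| ≤ 1) {s : ℝ} (hs : 0 ≤ s) (m : ℕ) :
    ∃ κ : Fin m → ι × ℤˣ,
      ν.real {y | s ≤ |atomAverage (signedAtoms g) κ y - ∑ i, v i * g i y|} ≤
        2 * exp (-(m * s ^ 2 / 2)) * ν.real Set.univ := by
  let _ : MeasurableSpace (ι × ℤˣ) := ⊤
  obtain ⟨w, hw, hwv⟩ := exists_mem_stdSimplex_sum_signed_eq hv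
  obtain ⟨ρ, _, hρ⟩ := exists_isProbabilityMeasure_integral_eq_sum hw
  obtain ⟨κ, hκ⟩ := exists_atomAverage_close ρ ν (g := signedAtoms g)
    (measurable_from_prod_countable_right fun z => (hgm z.1).const_mul (z.2 : ℝ))
    (fun z y => by rcases Int.units_eq_one_or z.2 with hz | hz <;> simp [signedAtoms, hz, hg]) hs m
  have hmean (y : Ω) : ∫ z, signedAtoms g z y ∂ρ = ∑ i, v i * g i y :=
    (hρ _).trans (hwv fun i => g i y)
  refine ⟨κ, ?_⟩
  simpa only [hmean] using hκ

end Maurey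

section Sampling

variable {Ω : Type*} [MeasurableSpace Ω]

/-- The uniform probability measure on the sample points `x`, counted with multiplicity. -/
def empiricalMeasure {n : ℕ} (x : Fin n → Ω) : Measure Ω :=
  (n : ENNReal)⁻¹ • ∑ i, Measure.dirac (x i)

lemma empiricalMeasure_real_apply {n : ℕ} (x : Fin n → Ω) {s : Set Ω} (hs : MeasurableSet s) :
    (empiricalMeasure x).real s = (∑ i, s.indicator (1 : Ω → ℝ) (x i)) / n := by
  have hsum :
      (∑ i, Measure.dirac (x i) : Measure Ω).real s = ∑ i, s.indicator (1 : Ω → ℝ) (x i) := by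
    rw [measureReal_def, Measure.finsetSum_apply,
      ENNReal.toReal_sum fun i _ => measure_ne_top _ _]
    refine sum_congr rfl fun i _ => ?_
    by_cases hi : x i ∈ s <;> simp [Measure.dirac_apply' _ hs, hi]
  rw [empiricalMeasure, measureReal_ennreal_smul_apply, hsum, ENNReal.toReal_inv,
    ENNReal.toReal_natCast, inv_mul_eq_div]

lemma isProbabilityMeasure_empiricalMeasure {n : ℕ} (hn : 0 < n) (x : Fin n → Ω) :
    IsProbabilityMeasure (empiricalMeasure x) := by
  constructor
  simp [empiricalMeasure, ENNReal.inv_mul_cancel, hn.ne']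

lemma exists_mem_diff_of_empiricalMeasure_lt {n : ℕ} {x : Fin n → Ω} {s t : Set Ω}
    (hs : MeasurableSet s) (ht : MeasurableSet t)
    (h : (empiricalMeasure x).real s < (empiricalMeasure x).real t) : ∃ i, x i ∈ t \ s := by
  by_contra! hts
  refine h.not_ge ?_
  rw [empiricalMeasure_real_apply x hs, empiricalMeasure_real_apply x ht]
  refine div_le_div_of_nonneg_right (sum_le_sum fun i _ => ?_) n.cast_nonneg
  by_cases hi : x i ∈ t
  · have his : x i ∈ s := by_contra fun his => hts i ⟨hi, his⟩
    simp [hi, his]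
  · simpa only [Set.indicator_of_notMem hi] using
      Set.indicator_nonneg (f := (1 : Ω → ℝ)) (fun _ _ => zero_le_one) (x i)

lemma integral_exp_neg_indicator_le (μ : Measure Ω) [IsProbabilityMeasure μ] {s : Set Ω}
    (hs : MeasurableSet s) : ∫ y, exp (-s.indicator 1 y) ∂μ ≤ exp (-(μ.real s / 2)) := by
  have hpt (y : Ω) : exp (-s.indicator 1 y) ≤ 1 - s.indicator 1 y / 2 := by
    by_cases hy : y ∈ s
    · have : exp (-1) ≤ 1 / 2 := by
        rw [exp_neg, inv_eq_one_div]
        exact one_div_le_one_div_of_le two_pos (by linarith [add_one_le_exp 1])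
      simpa [hy] using this.trans_eq (by norm_num)
    · simp [hy]
  have hint : Integrable (s.indicator (1 : Ω → ℝ)) μ := (integrable_const 1).indicator hs
  calc ∫ y, exp (-s.indicator 1 y) ∂μ ≤ ∫ y, (1 - s.indicator 1 y / 2) ∂μ :=
        integral_mono_of_nonneg (.of_forall fun y => (exp_pos _).le)
          ((integrable_const 1).sub (hint.div_const 2)) (.of_forall hpt)
    _ = 1 - μ.real s / 2 := by
        rw [integral_sub (integrable_const 1) (hint.div_const 2), integral_div,
          integral_indicator_one hs]
        simp
    _ ≤ exp (-(μ.real s / 2)) := one_sub_le_exp_neg _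

lemma exp_neg_sum_indicator_eq_prod {α : Type*} {n : ℕ} (s : Set α) (x : Fin n → α) :
    exp (-∑ i, s.indicator 1 (x i)) = ∏ i, exp (-s.indicator 1 (x i)) := by
  rw [← exp_sum, sum_neg_distrib]

lemma integrable_exp_neg_sum_indicator (μ : Measure Ω) [IsProbabilityMeasure μ] {s : Set Ω}
    (hs : MeasurableSet s) (n : ℕ) : Integrable (fun x : Fin n → Ω =>
      exp (-∑ i, s.indicator 1 (x i))) (Measure.pi fun _ => μ) := by
  simp only [exp_neg_sum_indicator_eq_prod]
  refine Integrable.fintype_prod (f := fun _ y => exp (-s.indicator 1 y)) fun _ => ?_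
  refine Integrable.of_bound
    (measurable_one.indicator hs).neg.exp.aestronglyMeasurable 1 (.of_forall fun y => ?_)
  simpa only [norm_eq_abs, abs_exp, exp_le_one_iff, neg_nonpos] using
    Set.indicator_nonneg (f := (1 : Ω → ℝ)) (fun _ _ => zero_le_one) y

lemma integral_exp_neg_sum_indicator_le (μ : Measure Ω) [IsProbabilityMeasure μ] {s : Set Ω}
    (hs : MeasurableSet s) (n : ℕ) :
    ∫ x : Fin n → Ω, exp (-∑ i, s.indicator 1 (x i)) ∂(Measure.pi fun _ => μ) ≤
      exp (-(n * (μ.real s / 2))) := by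
  simp only [exp_neg_sum_indicator_eq_prod]
  rw [integral_fintype_prod_eq_pow (ι := Fin n) fun y => exp (-s.indicator 1 y),
    Fintype.card_fin, ← mul_neg, exp_nat_mul]
  exact pow_le_pow_left₀ (integral_nonneg fun y => (exp_pos _).le)
    (integral_exp_neg_indicator_le μ hs) n

/-- The first moment method for `∑ⱼ exp(-#{i | xᵢ ∈ Aⱼ})`, the sum running over the large `Aⱼ`: it
dominates each of its terms. -/
lemma exists_points_forall_le_empiricalMeasure (μ : Measure Ω) [IsProbabilityMeasure μ]
    {K : Type*} [Fintype K] {A : K → Set Ω} (hA : ∀ j, MeasurableSet (A j)) (a : ℝ) {n : ℕ}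
    (hn : 0 < n) :
    ∃ x : Fin n → Ω, ∀ j, a ≤ μ.real (A j) →
      a / 2 - log (Fintype.card K) / n ≤ (empiricalMeasure x).real (A j) := by
  let hits (x : Fin n → Ω) (j : K) : ℝ := ∑ i, (A j).indicator 1 (x i)
  let J : Finset K := {j | a ≤ μ.real (A j)}
  have hint (j : K) : Integrable (fun x => exp (-hits x j)) (Measure.pi fun _ => μ) :=
    integrable_exp_neg_sum_indicator μ (hA j) n
  have hmean (j) (hj : j ∈ J) :
      ∫ x, exp (-hits x j) ∂(Measure.pi fun _ => μ) ≤ exp (-(n * (a / 2))) :=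
    (integral_exp_neg_sum_indicator_le μ (hA j) n).trans (by gcongr; exact (mem_filter.1 hj).2)
  obtain ⟨x, hx⟩ := exists_le_integral (integrable_finsetSum J fun j _ => hint j)
  refine ⟨x, fun j hj => ?_⟩
  have key : exp (-hits x j) ≤ Fintype.card K * exp (-(n * (a / 2))) :=
    calc exp (-hits x j) ≤ ∑ j ∈ J, exp (-hits x j) :=
          single_le_sum (f := fun j => exp (-hits x j)) (fun j _ => (exp_pos _).le)
            (mem_filter.2 ⟨mem_univ j, hj⟩)
      _ ≤ ∑ j ∈ J, exp (-(n * (a / 2))) :=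
          hx.trans ((integral_finsetSum _ fun j _ => hint j).trans_le (sum_le_sum hmean))
      _ ≤ Fintype.card K * exp (-(n * (a / 2))) := by
          rw [sum_const, nsmul_eq_mul]
          gcongr
          exact card_le_univ J
  have hK : (0 : ℝ) < Fintype.card K := by exact_mod_cast Fintype.card_pos_iff.2 ⟨j⟩
  have hn' : (0 : ℝ) < n := by exact_mod_cast hn
  have hlog := log_le_log (exp_pos _) key
  rw [log_mul hK.ne' (exp_pos _).ne', log_exp, log_exp] at hlog
  rw [empiricalMeasure_real_apply x (hA j), le_div_iff₀ hn', sub_mul, div_mul_cancel₀ _ hn'.ne']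
  linarith

variable {ι : Type*} [Fintype ι] [Nonempty ι]

lemma lt_abs_sum_of_forall_atomAverage (μ : Measure Ω) [IsProbabilityMeasure μ]
    {g : ι → Ω → ℝ} (hgm : ∀ i, Measurable (g i)) (hg : ∀ i y, |g i y| ≤ 1) {t q : ℝ}
    (ht : 0 ≤ t) {m n : ℕ} (hn : 0 < n) (hq : 16 * exp (-(m * t ^ 2 / 32)) ≤ q) {x : Fin n → Ω}
    (hx : ∀ κ : Fin m → ι × ℤˣ,
      3 * q / 4 ≤ μ.real {y | 3 * t / 4 ≤ |atomAverage (signedAtoms g) κ y|} →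
        q / 4 < (empiricalMeasure x).real {y | 3 * t / 4 ≤ |atomAverage (signedAtoms g) κ y|})
    {v : ι → ℝ} (hv : ∑ k, |v k| ≤ 1) (hμv : q < μ.real {y | t ≤ |∑ k, v k * g k y|}) :
    ∃ i, t / 2 < |∑ k, v k * g k (x i)| := by
  have := isProbabilityMeasure_empiricalMeasure hn x
  obtain ⟨κ, hκ⟩ := exists_atomAverage_signedAtoms_close (μ + empiricalMeasure x) hgm hg hv
    (s := t / 4) (by positivity) m
  have hP := measurable_atomAverage (fun z : ι × ℤˣ => (hgm z.1).const_mul (z.2 : ℝ)) κ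
  set P := atomAverage (signedAtoms g) κ
  set p : Ω → ℝ := fun y => ∑ k, v k * g k y
  have hp : Measurable p := Finset.measurable_fun_sum _ fun k _ => (hgm k).const_mul _
  let bad : Set Ω := {y | t / 4 ≤ |P y - p y|}
  let large : Set Ω := {y | 3 * t / 4 ≤ |P y|}
  have hbad : μ.real bad + (empiricalMeasure x).real bad ≤ q / 4 := by
    have hexp : m * (t / 4) ^ 2 / 2 = m * t ^ 2 / 32 := by ring
    rw [measureReal_add_apply, measureReal_add_apply, probReal_univ, probReal_univ, hexp] at hκ
    linarith
  have hlarge : 3 * q / 4 ≤ μ.real large := by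
    have hsub : {y | t ≤ |p y|} ⊆ large ∪ bad := fun y (hy : t ≤ |p y|) => by
      rcases le_or_gt (t / 4) |P y - p y| with hyb | hyb
      · exact Or.inr hyb
      · refine Or.inl (?_ : 3 * t / 4 ≤ |P y|)
        rw [abs_sub_comm] at hyb
        linarith [abs_sub_abs_le_abs_sub (p y) (P y)]
    have := (measureReal_mono (μ := μ) hsub).trans (measureReal_union_le large bad)
    linarith [measureReal_nonneg (μ := empiricalMeasure x) (s := bad)]
  obtain ⟨i, (hi : 3 * t / 4 ≤ |P (x i)|), (hi_bad : ¬t / 4 ≤ |P (x i) - p (x i)|)⟩ :=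
    exists_mem_diff_of_empiricalMeasure_lt (measurableSet_le measurable_const (hP.sub hp).abs)
      (measurableSet_le measurable_const hP.abs)
      (by linarith [hx κ hlarge, measureReal_nonneg (μ := μ) (s := bad)] :
        (empiricalMeasure x).real bad < (empiricalMeasure x).real large)
  exact ⟨i, by linarith [abs_sub_abs_le_abs_sub (P (x i)) (p (x i))]⟩

/-- The sample points hit every large level set of the finitely many Maurey approximants; an
arbitrary `∑ₖ vₖ gₖ` is then handled by an approximant that is good with respect to both `μ` and the
empirical measure of the sample. -/
lemma exists_points_forall_lt_abs_sum (μ : Measure Ω) [IsProbabilityMeasure μ]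
    {g : ι → Ω → ℝ} (hgm : ∀ i, Measurable (g i)) (hg : ∀ i y, |g i y| ≤ 1) {t q : ℝ}
    (ht : 0 ≤ t) {m n : ℕ} (hq : 16 * exp (-(m * t ^ 2 / 32)) ≤ q)
    (hmn : m * log (2 * Fintype.card ι) < n * q / 8) :
    ∃ x : Fin n → Ω, ∀ v : ι → ℝ, ∑ k, |v k| ≤ 1 → q < μ.real {y | t ≤ |∑ k, v k * g k y|} →
      ∃ i, t / 2 < |∑ k, v k * g k (x i)| := by
  have hn : 0 < n := by
    refine Nat.pos_of_ne_zero fun h0 => hmn.not_ge ?_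
    have hlog : 0 ≤ log (2 * Fintype.card ι) := by exact_mod_cast log_natCast_nonneg (2 * _)
    simpa [h0] using mul_nonneg m.cast_nonneg hlog
  have hn' : (0 : ℝ) < n := by exact_mod_cast hn
  obtain ⟨x, hx⟩ := exists_points_forall_le_empiricalMeasure μ
    (A := fun κ : Fin m → ι × ℤˣ => {y | 3 * t / 4 ≤ |atomAverage (signedAtoms g) κ y|})
    (fun κ => measurableSet_le measurable_const (measurable_atomAverage
      (fun z : ι × ℤˣ => (hgm z.1).const_mul (z.2 : ℝ)) κ).abs) (3 * q / 4) hn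
  refine ⟨x, fun v => lt_abs_sum_of_forall_atomAverage μ hgm hg ht hn hq fun κ hκ => ?_⟩
  have hlog : log (Fintype.card (Fin m → ι × ℤˣ)) / n < q / 8 := by
    have hcard : (Fintype.card (Fin m → ι × ℤˣ) : ℝ) = (2 * Fintype.card ι) ^ m := by
      simp [mul_comm]
    rw [div_lt_iff₀ hn', hcard, log_pow]
    linarith
  linarith [hx κ hκ]

end Sampling

section Discretization

variable {Ω ι : Type*} [MeasurableSpace Ω]

lemma sq_le_sum_dyadic_indicator {u : ℝ} (hu : |u| ≤ 1) (L : ℕ) :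
    u ^ 2 ≤ (1 / 4) ^ L +
      ∑ j ∈ range L, (1 / 4) ^ j * {w : ℝ | (1 / 2) ^ (j + 1) ≤ |w|}.indicator 1 u := by
  induction L with
  | zero => simpa using hu
  | succ L ih =>
    rw [sum_range_succ]
    by_cases h : (1 / 2 : ℝ) ^ (L + 1) ≤ |u|
    · rw [Set.indicator_of_mem (by exact h), Pi.one_apply]
      linarith [pow_pos (by norm_num : (0 : ℝ) < 1 / 4) (L + 1)]
    · have hsq : u ^ 2 ≤ (1 / 4) ^ (L + 1) := by
        have h4 : (1 / 4 : ℝ) ^ (L + 1) = ((1 / 2) ^ (L + 1)) ^ 2 := by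
          rw [← pow_mul, mul_comm, pow_mul]; norm_num
        rw [h4, ← sq_abs]
        exact pow_le_pow_left₀ (abs_nonneg u) (not_le.1 h).le 2
      have hsum : 0 ≤ ∑ j ∈ range L,
          (1 / 4 : ℝ) ^ j * {w : ℝ | (1 / 2) ^ (j + 1) ≤ |w|}.indicator 1 u :=
        sum_nonneg fun j _ => mul_nonneg (by positivity)
          (Set.indicator_nonneg (f := (1 : ℝ → ℝ)) (fun _ _ => zero_le_one) u)
      rw [Set.indicator_of_notMem (by exact h)]
      linarith

lemma integral_sq_le_sum_dyadic (μ : Measure Ω) [IsProbabilityMeasure μ] {p : Ω → ℝ}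
    (hp : Measurable p) (hb : ∀ y, |p y| ≤ 1) (L : ℕ) :
    ∫ y, p y ^ 2 ∂μ ≤
      (1 / 4) ^ L + ∑ j ∈ range L, (1 / 4) ^ j * μ.real {y | (1 / 2) ^ (j + 1) ≤ |p y|} := by
  let level (j : ℕ) : Set Ω := {y | (1 / 2) ^ (j + 1) ≤ |p y|}
  have hlevel (j : ℕ) : MeasurableSet (level j) := measurableSet_le measurable_const hp.abs
  have hint (j : ℕ) : Integrable (fun y => (1 / 4) ^ j * (level j).indicator (1 : Ω → ℝ) y) μ :=
    ((integrable_const 1).indicator (hlevel j)).const_mul _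
  calc ∫ y, p y ^ 2 ∂μ
      ≤ ∫ y, (1 / 4) ^ L + ∑ j ∈ range L, (1 / 4) ^ j * (level j).indicator (1 : Ω → ℝ) y ∂μ :=
        integral_mono_of_nonneg (.of_forall fun y => sq_nonneg _)
          ((integrable_const _).add (integrable_finsetSum _ fun j _ => hint j))
          (.of_forall fun y => sq_le_sum_dyadic_indicator (hb y) L)
    _ = _ := by
        rw [integral_add (integrable_const _) (integrable_finsetSum _ fun j _ => hint j),
          integral_finsetSum _ fun j _ => hint j]
        simp only [integral_const_mul, integral_indicator_one (hlevel _), integral_const,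
          probReal_univ, one_smul, level]

lemma eLpNorm_two_le_ofReal {E : Type*} [NormedAddCommGroup E] {μ : Measure Ω} {f : Ω → E}
    (hf : MemLp f 2 μ) {r : ℝ} (hr : 0 ≤ r) (h : ∫ y, ‖f y‖ ^ 2 ∂μ ≤ r ^ 2) :
    eLpNorm f 2 μ ≤ ENNReal.ofReal r := by
  rw [hf.eLpNorm_eq_integral_rpow_norm two_ne_zero ENNReal.ofNat_ne_top]
  refine ENNReal.ofReal_le_ofReal ?_
  simp only [ENNReal.toReal_ofNat, rpow_two]
  calc (∫ y, ‖f y‖ ^ 2 ∂μ) ^ (2⁻¹ : ℝ) ≤ (r ^ 2) ^ (2⁻¹ : ℝ) := by gcongr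
    _ = r := by rw [← one_div, ← sqrt_eq_rpow, sqrt_sq hr]

variable [Fintype ι]

lemma abs_sum_mul_le_one {a b : ι → ℝ} (ha : ∑ k, |a k| ≤ 1) (hb : ∀ k, |b k| ≤ 1) :
    |∑ k, a k * b k| ≤ 1 :=
  (abs_sum_le_sum_abs _ _).trans <| (sum_le_sum fun k _ => by
    rw [abs_mul]; exact mul_le_of_le_one_right (abs_nonneg _) (hb k)).trans ha

lemma sixteen_mul_exp_neg_le {L j : ℕ} (hL : 1 ≤ L) :
    16 * exp (-(7 * L)) ≤ 4 ^ j / (4 ^ L * L) := by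
  have : (0 : ℝ) < L := by exact_mod_cast hL
  have hLpow : (L : ℝ) ≤ 2 ^ L := by exact_mod_cast L.lt_two_pow_self.le
  have hexp : (2 : ℝ) ^ (7 * L) ≤ exp (7 * L) := by
    calc (2 : ℝ) ^ (7 * L) ≤ exp 1 ^ (7 * L) := by gcongr; exact exp_one_gt_two.le
      _ = exp (7 * L) := by rw [← exp_nat_mul]; push_cast; ring_nf
  have hpow : 16 * (4 ^ L * L) ≤ exp (7 * L) := by
    calc 16 * (4 ^ L * (L : ℝ)) ≤ 16 ^ L * (4 ^ L * 2 ^ L) := by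
          gcongr
          exact le_self_pow₀ (by norm_num) (by omega)
      _ = 2 ^ (7 * L) := by rw [← mul_pow, ← mul_pow, pow_mul]; norm_num
      _ ≤ exp (7 * L) := hexp
  calc 16 * exp (-(7 * L)) ≤ 1 / (4 ^ L * L) := by
        rw [exp_neg, ← div_eq_mul_inv, div_le_div_iff₀ (exp_pos _) (by positivity)]
        linarith
    _ ≤ 4 ^ j / (4 ^ L * L) := by gcongr; exact one_le_pow₀ (by norm_num)

variable [Nonempty ι]

/-- The length `896 L 4^j` of the Maurey averages and the measure that may be missed both grow like
`4^j`, so the number of points needed does not depend on the level. -/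
lemma exists_points_measure_dyadic_level_le (μ : Measure Ω) [IsProbabilityMeasure μ]
    {g : ι → Ω → ℝ} (hgm : ∀ i, Measurable (g i)) (hg : ∀ i y, |g i y| ≤ 1) {L j n : ℕ} (hj : j < L)
    (hn : 7168 * L ^ 2 * 4 ^ L * log (2 * Fintype.card ι) < n) :
    ∃ x : Fin n → Ω, ∀ v : ι → ℝ, ∑ k, |v k| ≤ 1 →
      (∀ i, |∑ k, v k * g k (x i)| ≤ (1 / 2) ^ (L + 1)) →
        μ.real {y | (1 / 2) ^ (j + 1) ≤ |∑ k, v k * g k y|} ≤ 4 ^ j / (4 ^ L * L) := by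
  have hL : (0 : ℝ) < L := by exact_mod_cast hj.pos
  have hexponent : ((896 * L * 4 ^ j : ℕ) : ℝ) * ((1 / 2) ^ (j + 1)) ^ 2 / 32 = 7 * L := by
    have hsq : ((1 / 2 : ℝ) ^ (j + 1)) ^ 2 = 1 / (4 * 4 ^ j) := by
      rw [← pow_mul, mul_comm, pow_mul, ← pow_succ', ← one_div_pow]; norm_num
    push_cast
    rw [hsq]
    field_simp
    norm_num
  obtain ⟨x, hx⟩ := exists_points_forall_lt_abs_sum μ hgm hg (t := (1 / 2) ^ (j + 1))
    (q := 4 ^ j / (4 ^ L * L)) (m := 896 * L * 4 ^ j) (n := n) (by positivity)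
    (by rw [hexponent]; exact sixteen_mul_exp_neg_le hj.pos)
    (by
      rw [mul_div_assoc', div_div, lt_div_iff₀ (by positivity)]
      push_cast
      linarith [mul_lt_mul_of_pos_right hn (by positivity : (0 : ℝ) < 4 ^ j)])
  refine ⟨x, fun v hv hsmall => ?_⟩
  by_contra! hlt
  obtain ⟨i, hi⟩ := hx v hv hlt
  refine hi.not_ge ((hsmall i).trans ?_)
  rw [← mul_one_div ((1 / 2 : ℝ) ^ _), ← pow_succ]
  exact pow_le_pow_of_le_one (by norm_num) (by norm_num) (by omega)

lemma exists_points_integral_sq_sum_le (μ : Measure Ω) [IsProbabilityMeasure μ]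
    {g : ι → Ω → ℝ} (hgm : ∀ i, Measurable (g i)) (hg : ∀ i y, |g i y| ≤ 1) {L n : ℕ} (hL : 1 ≤ L)
    (hn : 7168 * L ^ 2 * 4 ^ L * log (2 * Fintype.card ι) < n) :
    ∃ x : Fin L × Fin n → Ω, ∀ v : ι → ℝ, ∑ k, |v k| ≤ 1 →
      (∀ i, |∑ k, v k * g k (x i)| ≤ (1 / 2) ^ (L + 1)) →
        ∫ y, (∑ k, v k * g k y) ^ 2 ∂μ ≤ 2 * (1 / 4) ^ L := by
  have : (0 : ℝ) < L := by exact_mod_cast hL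
  choose x hx using fun j : Fin L => exists_points_measure_dyadic_level_le μ hgm hg j.2 hn
  refine ⟨fun i => x i.1 i.2, fun v hv hsmall => ?_⟩
  calc ∫ y, (∑ k, v k * g k y) ^ 2 ∂μ
      ≤ (1 / 4) ^ L +
          ∑ j ∈ range L, (1 / 4) ^ j * μ.real {y | (1 / 2) ^ (j + 1) ≤ |∑ k, v k * g k y|} :=
        integral_sq_le_sum_dyadic μ (Finset.measurable_fun_sum _ fun k _ => (hgm k).const_mul _)
          (fun y => abs_sum_mul_le_one hv fun k => hg k y) L
    _ ≤ (1 / 4) ^ L + ∑ j ∈ range L, (1 / 4 : ℝ) ^ j * (4 ^ j / (4 ^ L * L)) := by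
        gcongr with j hj
        exact hx ⟨j, mem_range.1 hj⟩ v hv fun i => hsmall (⟨j, mem_range.1 hj⟩, i)
    _ = 2 * (1 / 4) ^ L := by
        have hterm (j : ℕ) : (1 / 4 : ℝ) ^ j * (4 ^ j / (4 ^ L * L)) = 1 / (4 ^ L * L) := by
          rw [one_div_pow]; field_simp
        rw [sum_congr rfl fun j _ => hterm j, sum_const, card_range, nsmul_eq_mul, one_div_pow]
        field_simp
        norm_num

lemma exists_points_integral_re_sum_sq_le (μ : Measure Ω) [IsProbabilityMeasure μ]
    {e : ι → Ω → ℂ} (hem : ∀ k, Measurable (e k)) (he : ∀ k y, ‖e k y‖ ≤ 1) {L n : ℕ} (hL : 1 ≤ L)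
    (hn : 7168 * L ^ 2 * 4 ^ L * log (4 * Fintype.card ι) < n) :
    ∃ x : Fin L × Fin n → Ω, ∀ c : ι → ℂ, ∑ k, ‖c k‖ ≤ 1 →
      (∀ i, ‖∑ k, c k * e k (x i)‖ ≤ (1 / 2) ^ L) →
        ∫ y, (∑ k, c k * e k y).re ^ 2 ∂μ ≤ 8 * (1 / 4) ^ L := by
  let g : ι ⊕ ι → Ω → ℝ := Sum.elim (fun k y => (e k y).re) (fun k y => (e k y).im)
  obtain ⟨x, hx⟩ := exists_points_integral_sq_sum_le μ (g := g) (L := L) (n := n)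
    (Sum.rec (fun k => Complex.measurable_re.comp (hem k))
      fun k => Complex.measurable_im.comp (hem k))
    (Sum.rec (fun k y => (Complex.abs_re_le_norm _).trans (he k y))
      fun k y => (Complex.abs_im_le_norm _).trans (he k y)) hL
    (by
      have hcard : (2 * Fintype.card (ι ⊕ ι) : ℝ) = 4 * Fintype.card ι := by
        rw [Fintype.card_sum]; push_cast; ring
      rwa [hcard])
  refine ⟨x, fun c hc hsmall => ?_⟩
  let v : ι ⊕ ι → ℝ := Sum.elim (fun k => (c k).re / 2) (fun k => -(c k).im / 2)
  have hv : ∑ k, |v k| ≤ 1 := by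
    rw [Fintype.sum_sum_type, ← sum_add_distrib]
    refine (sum_le_sum fun k _ => ?_).trans hc
    simp only [v, Sum.elim_inl, Sum.elim_inr, abs_div, abs_neg, abs_two]
    linarith [Complex.abs_re_le_norm (c k), Complex.abs_im_le_norm (c k)]
  have hre (y : Ω) : ∑ k, v k * g k y = (∑ k, c k * e k y).re / 2 := by
    rw [Fintype.sum_sum_type, ← sum_add_distrib, Complex.re_sum, sum_div]
    refine sum_congr rfl fun k _ => ?_
    simp only [v, g, Sum.elim_inl, Sum.elim_inr, Complex.mul_re]
    ring
  have hint := hx v hv fun i => by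
    rw [hre, abs_div, abs_two, pow_succ, mul_one_div]
    gcongr
    exact (Complex.abs_re_le_norm _).trans (hsmall i)
  simp only [hre, div_pow _ (2 : ℝ), integral_div] at hint
  linarith

lemma exists_points_eLpNorm_sum_le (μ : Measure Ω) [IsProbabilityMeasure μ]
    {e : ι → Ω → ℂ} (hem : ∀ k, Measurable (e k)) (he : ∀ k y, ‖e k y‖ ≤ 1) {L n : ℕ} (hL : 1 ≤ L)
    (hn : 7168 * L ^ 2 * 4 ^ L * log (4 * Fintype.card ι) < n) :
    ∃ x : Fin L × Fin n → Ω, ∀ c : ι → ℂ, ∑ k, ‖c k‖ ≤ 1 →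
      (∀ i, ‖∑ k, c k * e k (x i)‖ ≤ (1 / 2) ^ L) →
        eLpNorm (fun y => ∑ k, c k * e k y) 2 μ ≤ ENNReal.ofReal (4 * (1 / 2) ^ L) := by
  obtain ⟨x, hx⟩ := exists_points_integral_re_sum_sq_le μ hem he hL hn
  refine ⟨x, fun c hc hsmall => ?_⟩
  set T : Ω → ℂ := fun y => ∑ k, c k * e k y
  have hT : MemLp T 2 μ := by
    refine MemLp.of_bound (Finset.measurable_fun_sum _ fun k _ =>
      (hem k).const_mul (c k)).aestronglyMeasurable 1 (.of_forall fun y => ?_)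
    refine (norm_sum_le_of_le _ fun k _ => ?_).trans hc
    rw [norm_mul]
    exact mul_le_of_le_one_right (norm_nonneg _) (he k y)
  have hrot (y : Ω) : ∑ k, -Complex.I * c k * e k y = -Complex.I * T y := by
    simp only [T, mul_sum, mul_assoc]
  have hre : ∫ y, (T y).re ^ 2 ∂μ ≤ 8 * (1 / 4) ^ L := hx c hc hsmall
  have him : ∫ y, (T y).im ^ 2 ∂μ ≤ 8 * (1 / 4) ^ L := by
    have := hx (fun k => -Complex.I * c k) (by simpa using hc) fun i => by
      rw [hrot, norm_mul, norm_neg, Complex.norm_I, one_mul]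
      exact hsmall i
    simp only [hrot] at this
    simpa only [neg_mul, Complex.neg_re, Complex.I_mul_re, neg_neg] using this
  refine eLpNorm_two_le_ofReal hT (by positivity) ?_
  calc ∫ y, ‖T y‖ ^ 2 ∂μ = ∫ y, (T y).re ^ 2 + (T y).im ^ 2 ∂μ := by
        simp only [Complex.sq_norm, Complex.normSq_apply, ← sq]
    _ = ∫ y, (T y).re ^ 2 ∂μ + ∫ y, (T y).im ^ 2 ∂μ :=
        integral_add hT.re.integrable_sq hT.im.integrable_sq
    _ ≤ 16 * (1 / 4) ^ L := by linarith
    _ = (4 * (1 / 2) ^ L) ^ 2 := by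
        rw [mul_pow, ← pow_mul, mul_comm L, pow_mul]; norm_num

end Discretization

section Fourier

variable {d : ℕ} {f g : (Fin d → ℝ) → ℂ}

lemma Periodic1.apply_add_intCast (hf : Periodic1 d f) (x : Fin d → ℝ) (m : Fin d → ℤ) :
    f (fun i => x i + m i) = f x := by
  have hsingle (i : Fin d) : Function.Periodic f (Pi.single i (m i : ℝ)) := by
    have hone : Function.Periodic f (Pi.single i (1 : ℝ)) := fun y => by
      convert hf y i using 2
      ext j
      rcases eq_or_ne j i with rfl | hj <;> simp [*]
    simpa [← Pi.single_smul] using hone.zsmul (m i)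
  have hsum : Function.Periodic f (∑ i, Pi.single i (m i : ℝ)) :=
    sum_induction _ (Function.Periodic f) (fun _ _ => Function.Periodic.add_period)
      (fun y => by rw [add_zero]) fun i _ => hsingle i
  simpa [univ_sum_single (fun i => (m i : ℝ)), Pi.add_def] using hsum x

lemma Periodic1.exists_continuousMap_unitAddTorus (hf : Periodic1 d f) (hc : Continuous f) :
    ∃ F : C(UnitAddTorus (Fin d), ℂ), ∀ x : Fin d → ℝ,
      F (fun i => (x i : UnitAddCircle)) = f x := by
  let Q : C(Fin d → ℝ, UnitAddTorus (Fin d)) :=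
    ⟨fun x i => (x i : UnitAddCircle), by fun_prop⟩
  have hQ : Topology.IsQuotientMap Q :=
    (IsOpenQuotientMap.piMap fun _ => QuotientAddGroup.isOpenQuotientMap_mk).isQuotientMap
  have hfac : Function.FactorsThrough (⟨f, hc⟩ : C(Fin d → ℝ, ℂ)) Q := fun x y hxy => by
    have hdiff (i : Fin d) : ∃ m : ℤ, y i = x i + m := by
      obtain ⟨m, hm⟩ := AddSubgroup.mem_zmultiples_iff.1 (QuotientAddGroup.eq.1 (congrFun hxy i))
      exact ⟨m, by linarith [zsmul_one (R := ℝ) m]⟩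
    choose m hm using hdiff
    simpa [← hm] using (hf.apply_add_intCast x m).symm
  exact ⟨hQ.lift ⟨f, hc⟩ hfac, fun x => DFunLike.congr_fun (hQ.lift_comp ⟨f, hc⟩ hfac) x⟩

lemma mFourier_coe (k : Fin d → ℤ) (x : Fin d → ℝ) :
    UnitAddTorus.mFourier k (fun i => (x i : UnitAddCircle)) = eK d k x := by
  rw [eK, mul_sum, Complex.exp_sum, UnitAddTorus.mFourier, ContinuousMap.coe_mk]
  refine prod_congr rfl fun i _ => ?_
  rw [fourier_coe_apply, Complex.ofReal_one, div_one]
  ring_nf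

lemma cube_ae_eq_pi_Ioc (d : ℕ) :
    cube d =ᵐ[volume] {x : Fin d → ℝ | ∀ i, x i ∈ Set.Ioc (0 : ℝ) (0 + 1)} := by
  have := Measure.univ_pi_Ioc_ae_eq_Icc (μ := fun _ : Fin d => (volume : Measure ℝ))
    (f := fun _ => 0) (g := fun _ => 1)
  rw [← volume_pi, ← Set.pi_univ_Icc] at this
  have hset : {x : Fin d → ℝ | ∀ i, x i ∈ Set.Ioc (0 : ℝ) (0 + 1)} =
      Set.univ.pi fun _ => Set.Ioc 0 1 := by ext; simp
  rw [hset]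
  exact this.symm

lemma mFourierCoeff_eq_fCoeff {F : UnitAddTorus (Fin d) → ℂ}
    (hF : ∀ x : Fin d → ℝ, F (fun i => (x i : UnitAddCircle)) = f x) (k : Fin d → ℤ) :
    UnitAddTorus.mFourierCoeff F k = fCoeff d f k := by
  rw [UnitAddTorus.mFourierCoeff_eq_integral F k fun _ => 0, fCoeff,
    setIntegral_congr_set (cube_ae_eq_pi_Ioc d)]
  congr 1 with x
  rw [mFourier_coe, hF, smul_eq_mul, mul_comm]
  simp [eK]

lemma norm_eK (k : Fin d → ℤ) (x : Fin d → ℝ) : ‖eK d k x‖ = 1 := by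
  have hreal : 2 * (π : ℂ) * Complex.I * ∑ i, (k i : ℂ) * (x i : ℂ) =
      ((2 * π * ∑ i, (k i : ℝ) * x i : ℝ) : ℂ) * Complex.I := by
    push_cast; ring
  rw [eK, hreal, Complex.norm_exp_ofReal_mul_I]

lemma continuous_eK (k : Fin d → ℤ) : Continuous (eK d k) := by
  unfold eK; fun_prop

lemma one_le_logWeight (k : Fin d → ℤ) : 1 ≤ logWeight d k := le_max_left _ _

lemma norm_fCoeff_le_mul_logWeight (k : Fin d → ℤ) :
    ‖fCoeff d f k‖ ≤ ‖fCoeff d f k‖ * logWeight d k :=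
  le_mul_of_one_le_right (norm_nonneg _) (one_le_logWeight k)

lemma fCoeff_sub_div (hf : Continuous f) (hg : Continuous g) (a : ℂ) (k : Fin d → ℤ) :
    fCoeff d (fun y => (f y - g y) / a) k = (fCoeff d f k - fCoeff d g k) / a := by
  have hint {F : (Fin d → ℝ) → ℂ} (hF : Continuous F) : IntegrableOn (fun x => F x *
      Complex.exp (-(2 * π * Complex.I) * ∑ i, (k i : ℂ) * (x i : ℂ))) (cube d) :=
    (by fun_prop : Continuous _).continuousOn.integrableOn_compact
      (isCompact_univ_pi fun _ => isCompact_Icc)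
  simp only [fCoeff]
  rw [← integral_sub (hint hf) (hint hg), ← integral_div]
  congr 1 with x
  ring

namespace FdLog

lemma hasSum_fCoeff_mul_eK (hf : f ∈ FdLog d) (x : Fin d → ℝ) :
    HasSum (fun k => fCoeff d f k * eK d k x) (f x) := by
  obtain ⟨hc, hp, hs, -⟩ := hf
  obtain ⟨F, hF⟩ := hp.exists_continuousMap_unitAddTorus hc
  have hcoeff := mFourierCoeff_eq_fCoeff hF
  have hsum : Summable (UnitAddTorus.mFourierCoeff F) := by
    rw [funext hcoeff]
    exact .of_norm <| hs.of_nonneg_of_le (fun _ => norm_nonneg _) norm_fCoeff_le_mul_logWeight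
  simpa only [hcoeff, mFourier_coe, hF, smul_eq_mul] using
    UnitAddTorus.hasSum_mFourier_series_apply_of_summable hsum fun i => (x i : UnitAddCircle)

lemma sum_norm_fCoeff_le_one (hf : f ∈ FdLog d) (s : Finset (Fin d → ℤ)) :
    ∑ k ∈ s, ‖fCoeff d f k‖ ≤ 1 :=
  calc ∑ k ∈ s, ‖fCoeff d f k‖ ≤ ∑ k ∈ s, ‖fCoeff d f k‖ * logWeight d k :=
        sum_le_sum fun k _ => norm_fCoeff_le_mul_logWeight k
    _ ≤ ∑' k, ‖fCoeff d f k‖ * logWeight d k :=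
        hf.2.2.1.sum_le_tsum s fun k _ =>
          (norm_nonneg _).trans (norm_fCoeff_le_mul_logWeight k)
    _ ≤ 1 := hf.2.2.2

lemma half_sub_mem (hf : f ∈ FdLog d) (hg : g ∈ FdLog d) :
    (fun y => (f y - g y) / 2) ∈ FdLog d := by
  obtain ⟨hfc, hfp, hfs, hf1⟩ := hf
  obtain ⟨hgc, hgp, hgs, hg1⟩ := hg
  have hle (k : Fin d → ℤ) : ‖fCoeff d (fun y => (f y - g y) / 2) k‖ * logWeight d k ≤
      (‖fCoeff d f k‖ * logWeight d k + ‖fCoeff d g k‖ * logWeight d k) / 2 := by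
    rw [fCoeff_sub_div hfc hgc, norm_div, Complex.norm_ofNat, ← add_mul, div_mul_eq_mul_div]
    gcongr
    · exact zero_le_one.trans (one_le_logWeight k)
    · exact norm_sub_le _ _
  have hbound := (hfs.add hgs).div_const 2
  have hs := hbound.of_nonneg_of_le
    (fun k => (norm_nonneg _).trans (norm_fCoeff_le_mul_logWeight k)) hle
  refine ⟨(hfc.sub hgc).div_const 2, fun x i => by simp only [hfp x i, hgp x i], hs, ?_⟩
  calc _ ≤ _ := hs.tsum_le_tsum hle hbound
    _ ≤ 1 := by
      rw [tsum_div_const, hfs.tsum_add hgs]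
      linarith

end FdLog

lemma norm_sub_sum_le_tsum_div {κ E : Type*} [NormedAddCommGroup E] {a : κ → E}
    {S : E} (ha : HasSum a S) {w : κ → ℝ} (hw : ∀ k, 0 ≤ w k)
    (hs : Summable fun k => ‖a k‖ * w k) {B : ℝ} (hB : 0 < B) {s : Finset κ}
    (hBs : ∀ k ∉ s, B ≤ w k) : ‖S - ∑ k ∈ s, a k‖ ≤ (∑' k, ‖a k‖ * w k) / B := by
  have htail : HasSum (fun k : {k // k ∉ s} => a k) (S - ∑ k ∈ s, a k) := by
    rw [s.hasSum_compl_iff, sub_add_cancel]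
    exact ha
  have hnn (k : κ) : 0 ≤ ‖a k‖ * w k / B := by have := hw k; positivity
  have hs' := hs.div_const B
  calc ‖S - ∑ k ∈ s, a k‖ ≤ ∑' k : {k // k ∉ s}, ‖a k‖ * w k / B :=
        htail.norm_le_of_bounded (hs'.comp_injective Subtype.val_injective).hasSum fun k =>
          (le_div_iff₀ hB).2 (mul_le_mul_of_nonneg_left (hBs k k.2) (norm_nonneg _))
    _ ≤ ∑' k, ‖a k‖ * w k / B := tsum_comp_le_tsum_of_inj hs' hnn Subtype.val_injective
    _ = (∑' k, ‖a k‖ * w k) / B := tsum_div_const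

/-- The box `{-M, …, M}^d` of frequencies `k` with `‖k‖_∞ ≤ M`. -/
def freqBox (d M : ℕ) : Finset (Fin d → ℤ) := Fintype.piFinset fun _ => Icc (-M : ℤ) M

lemma card_freqBox (d M : ℕ) : (freqBox d M).card = (2 * M + 1) ^ d := by
  have : (M + 1 + M : ℤ).toNat = 2 * M + 1 := by omega
  rw [freqBox, Fintype.card_piFinset]
  simp [this]

lemma le_logWeight_of_notMem_freqBox {M : ℕ} {B : ℝ} (hM : exp B ≤ M) {k : Fin d → ℤ}
    (hk : k ∉ freqBox d M) : B ≤ logWeight d k := by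
  obtain ⟨i, hi⟩ : ∃ i, M < (k i).natAbs := by
    by_contra! h
    refine hk (Fintype.mem_piFinset.2 fun i => mem_Icc.2 ?_)
    have := h i
    omega
  have hsup : (M : ℝ) ≤ (univ.sup fun i => (k i).natAbs : ℕ) := by
    exact_mod_cast hi.le.trans (le_sup (f := fun i => (k i).natAbs) (mem_univ i))
  refine le_trans ?_ (le_max_right _ _)
  rw [le_log_iff_exp_le ((exp_pos B).trans_le (hM.trans hsup))]
  exact hM.trans hsup

lemma FdLog.norm_sub_sum_freqBox_le (hf : f ∈ FdLog d) {M : ℕ} {B : ℝ} (hB : 0 < B)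
    (hM : exp B ≤ M) (x : Fin d → ℝ) :
    ‖f x - ∑ k ∈ freqBox d M, fCoeff d f k * eK d k x‖ ≤ 1 / B := by
  have hnorm (k : Fin d → ℤ) : ‖fCoeff d f k * eK d k x‖ = ‖fCoeff d f k‖ := by
    rw [norm_mul, norm_eK, mul_one]
  have htail := norm_sub_sum_le_tsum_div (hasSum_fCoeff_mul_eK hf x)
    (fun k => zero_le_one.trans (one_le_logWeight k)) (by simpa only [hnorm] using hf.2.2.1) hB
    fun k => le_logWeight_of_notMem_freqBox hM
  simp only [hnorm] at htail
  exact htail.trans (by gcongr; exact hf.2.2.2)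

end Fourier

section Recovery

attribute [local instance] Measure.Subtype.measureSpace

variable {d : ℕ}

lemma measurableSet_cube (d : ℕ) : MeasurableSet (cube d) :=
  .univ_pi fun _ => measurableSet_Icc

lemma volume_cube (d : ℕ) : volume (cube d) = 1 := by
  rw [cube, volume_pi_pi]
  simp

lemma isProbabilityMeasure_volume_cube (d : ℕ) :
    IsProbabilityMeasure (volume : Measure (cube d)) where
  measure_univ := by
    rw [Measure.Subtype.volume_univ (measurableSet_cube d).nullMeasurableSet, volume_cube]

lemma log_four_mul_card_freqBox_le {B : ℕ} (hd : 1 ≤ d) (hB : 2 ≤ B) :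
    log (4 * (freqBox d (3 ^ B)).card) ≤ 5 * d * B := by
  have hcard : (4 * (freqBox d (3 ^ B)).card : ℝ) ≤ 3 ^ (2 + d * (B + 1)) := by
    have hside : 2 * 3 ^ B + 1 ≤ 3 ^ (B + 1) := by
      rw [pow_succ]; linarith [Nat.one_le_pow B 3 (by norm_num)]
    rw [card_freqBox, pow_add, mul_comm d, pow_mul]
    exact_mod_cast Nat.mul_le_mul (by norm_num) (Nat.pow_le_pow_left hside d)
  have hlog3 : log 3 ≤ 2 := (log_le_sub_one_of_pos (by norm_num)).trans (by norm_num)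
  have hpos : 0 < (freqBox d (3 ^ B)).card := by rw [card_freqBox]; positivity
  have hdB : 2 * (2 + d * (B + 1)) ≤ 5 * d * B := by nlinarith
  calc log (4 * (freqBox d (3 ^ B)).card) ≤ log (3 ^ (2 + d * (B + 1))) := by gcongr
    _ = (2 + d * (B + 1) : ℕ) * log 3 := log_pow _ _
    _ ≤ (2 + d * (B + 1) : ℕ) * 2 := by gcongr
    _ ≤ 5 * d * B := by rw [mul_comm]; exact_mod_cast hdB

lemma mul_log_card_freqBox_lt {L : ℕ} (hd : 1 ≤ d) (hL : 1 ≤ L) :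
    7168 * (L : ℝ) ^ 2 * 4 ^ L * log (4 * (freqBox d (3 ^ 2 ^ L)).card) <
      (36000 * d * L ^ 2 * 8 ^ L : ℕ) := by
  have hlog := log_four_mul_card_freqBox_le hd (le_self_pow₀ one_le_two (by omega) : 2 ≤ 2 ^ L)
  have : (0 : ℝ) < d := by exact_mod_cast hd
  have : (0 : ℝ) < L := by exact_mod_cast hL
  have h8 : (8 : ℝ) ^ L = 4 ^ L * 2 ^ L := by rw [← mul_pow]; norm_num
  push_cast at hlog ⊢
  calc 7168 * (L : ℝ) ^ 2 * 4 ^ L * log (4 * (freqBox d (3 ^ 2 ^ L)).card)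
      ≤ 7168 * (L : ℝ) ^ 2 * 4 ^ L * (5 * d * 2 ^ L) := by gcongr
    _ = 35840 * ((d : ℝ) * L ^ 2 * (4 ^ L * 2 ^ L)) := by ring
    _ < 36000 * ((d : ℝ) * L ^ 2 * (4 ^ L * 2 ^ L)) := by gcongr; norm_num
    _ = 36000 * d * L ^ 2 * 8 ^ L := by rw [h8]; ring

lemma exists_points_eLpNorm_sum_freqBox_le {L : ℕ} (hd : 1 ≤ d) (hL : 1 ≤ L) :
    ∃ x : Fin (L * (36000 * d * L ^ 2 * 8 ^ L)) → cube d, ∀ c : (Fin d → ℤ) → ℂ,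
      ∑ k ∈ freqBox d (3 ^ 2 ^ L), ‖c k‖ ≤ 1 →
      (∀ i, ‖∑ k ∈ freqBox d (3 ^ 2 ^ L), c k * eK d k (x i)‖ ≤ (1 / 2) ^ L) →
        eLpNorm (fun y => ∑ k ∈ freqBox d (3 ^ 2 ^ L), c k * eK d k y) 2
          (volume.restrict (cube d)) ≤ ENNReal.ofReal (4 * (1 / 2) ^ L) := by
  set K := freqBox d (3 ^ 2 ^ L)
  have : Nonempty K := Finset.Nonempty.coe_sort <| card_pos.1 <| by
    rw [card_freqBox]; positivity
  have := isProbabilityMeasure_volume_cube d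
  obtain ⟨x, hx⟩ := exists_points_eLpNorm_sum_le (volume : Measure (cube d))
    (e := fun (k : K) y => eK d k y)
    (fun k => (continuous_eK k.1).measurable.comp measurable_subtype_coe)
    (fun k y => (norm_eK k.1 y).le) hL
    (by rw [Fintype.card_coe]; exact mul_log_card_freqBox_lt hd hL)
  refine ⟨x ∘ finProdFinEquiv.symm, fun c hc hsmall => ?_⟩
  rw [← eLpNorm_comp_measurePreserving
    (measurable_sum _ fun k _ => (continuous_eK k).measurable.const_mul (c k)).aestronglyMeasurable
    (measurePreserving_subtype_coe (measurableSet_cube d))]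
  have hsum (y : Fin d → ℝ) : ∑ k ∈ K, c k * eK d k y = ∑ k : K, c k * eK d k y :=
    (sum_coe_sort K fun k => c k * eK d k y).symm
  simp only [hsum] at hsmall ⊢
  refine hx (fun k => c k) ((sum_coe_sort K fun k => ‖c k‖).trans_le hc) fun i => ?_
  simpa using hsmall (finProdFinEquiv i)

lemma FdLog.exists_points_eLpNorm_le {L : ℕ} (hd : 1 ≤ d) (hL : 1 ≤ L) :
    ∃ x : Fin (L * (36000 * d * L ^ 2 * 8 ^ L)) → cube d, ∀ h ∈ FdLog d, (∀ i, h (x i) = 0) →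
      eLpNorm h 2 (volume.restrict (cube d)) ≤ ENNReal.ofReal (5 * (1 / 2) ^ L) := by
  obtain ⟨x, hx⟩ := exists_points_eLpNorm_sum_freqBox_le hd hL
  refine ⟨x, fun h hh hzero => ?_⟩
  set S : (Fin d → ℝ) → ℂ := fun y => ∑ k ∈ freqBox d (3 ^ 2 ^ L), fCoeff d h k * eK d k y
  have hS : Continuous S := continuous_finsetSum _ fun k _ => (continuous_eK k).const_mul _
  have htail (y : Fin d → ℝ) : ‖h y - S y‖ ≤ (1 / 2) ^ L := by
    have hexp : exp (2 ^ L) ≤ (3 ^ 2 ^ L : ℕ) := by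
      rw [← mul_one (2 ^ L : ℝ), ← Nat.cast_two, ← Nat.cast_pow, exp_nat_mul, Nat.cast_pow]
      gcongr
      exact exp_one_lt_three.le
    rw [one_div_pow]
    exact norm_sub_sum_freqBox_le hh (by positivity) hexp y
  have hSnorm : eLpNorm S 2 (volume.restrict (cube d)) ≤ ENNReal.ofReal (4 * (1 / 2) ^ L) :=
    hx _ (sum_norm_fCoeff_le_one hh _) fun i => by
      simpa [hzero i] using htail (x i)
  have htailnorm : eLpNorm (h - S) 2 (volume.restrict (cube d)) ≤ ENNReal.ofReal ((1 / 2) ^ L) :=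
    (eLpNorm_le_of_ae_bound (.of_forall htail)).trans_eq (by simp [volume_cube])
  calc eLpNorm h 2 (volume.restrict (cube d)) = eLpNorm (S + (h - S)) 2 _ := by
        rw [add_sub_cancel]
    _ ≤ eLpNorm S 2 _ + eLpNorm (h - S) 2 _ :=
        eLpNorm_add_le hS.aestronglyMeasurable (hh.1.sub hS).aestronglyMeasurable one_le_two
    _ ≤ ENNReal.ofReal (4 * (1 / 2) ^ L) + ENNReal.ofReal ((1 / 2) ^ L) := by gcongr
    _ = ENNReal.ofReal (5 * (1 / 2) ^ L) := by
        rw [← ENNReal.ofReal_add (by positivity) (by positivity)]; ring_nf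

lemma FdLog.exists_points_eLpNorm_sub_le {L : ℕ} (hd : 1 ≤ d) (hL : 1 ≤ L) :
    ∃ x : Fin (L * (36000 * d * L ^ 2 * 8 ^ L)) → cube d, ∀ f ∈ FdLog d, ∀ g ∈ FdLog d,
      (∀ i, f (x i) = g (x i)) →
        eLpNorm (fun y => f y - g y) 2 (volume.restrict (cube d)) ≤
          ENNReal.ofReal (10 * (1 / 2) ^ L) := by
  obtain ⟨x, hx⟩ := exists_points_eLpNorm_le hd hL
  refine ⟨x, fun f hf g hg hfg => ?_⟩
  have hdouble : (fun y => f y - g y) = (2 : ℂ) • fun y => (f y - g y) / 2 := by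
    ext y
    simp only [Pi.smul_apply, smul_eq_mul]
    ring
  calc eLpNorm (fun y => f y - g y) 2 (volume.restrict (cube d))
      = ENNReal.ofReal 2 * eLpNorm (fun y => (f y - g y) / 2) 2 (volume.restrict (cube d)) := by
        rw [hdouble, eLpNorm_const_smul, ← ofReal_norm, Complex.norm_ofNat]
    _ ≤ ENNReal.ofReal 2 * ENNReal.ofReal (5 * (1 / 2) ^ L) := by
        gcongr
        exact hx _ (half_sub_mem hf hg) fun i => by simp [hfg i]
    _ = ENNReal.ofReal (10 * (1 / 2) ^ L) := by
        rw [← ENNReal.ofReal_mul zero_le_two]; ring_nf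

lemma exists_dyadic_scale {ε : ℝ} (hε : ε ∈ Set.Ioo (0 : ℝ) (1 / 2)) :
    ∃ L : ℕ, 1 ≤ L ∧ 10 * (1 / 2) ^ L ≤ ε ∧ (2 : ℝ) ^ L ≤ 20 * ε⁻¹ ∧ L ≤ 9 * log ε⁻¹ := by
  obtain ⟨hpos, hhalf⟩ := hε
  have htwo : 2 ≤ ε⁻¹ := by
    rw [le_inv_comm₀ two_pos hpos]; linarith
  obtain ⟨k, hle, hlt⟩ := exists_nat_pow_near (by linarith : 1 ≤ 10 * ε⁻¹) one_lt_two
  have hpow : (2 : ℝ) ^ (k + 1) ≤ 20 * ε⁻¹ := by rw [pow_succ]; linarith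
  refine ⟨k + 1, by omega, ?_, hpow, ?_⟩
  · rw [one_div_pow, mul_one_div, div_le_iff₀ (by positivity)]
    calc 10 = ε * (10 * ε⁻¹) := by field_simp
      _ ≤ ε * 2 ^ (k + 1) := by gcongr
  · have hsix : (2 : ℝ) ^ (k + 1) ≤ ε⁻¹ ^ 6 :=
      calc (2 : ℝ) ^ (k + 1) ≤ 2 ^ 5 * ε⁻¹ := hpow.trans (by gcongr; norm_num)
        _ ≤ ε⁻¹ ^ 5 * ε⁻¹ := by gcongr
        _ = ε⁻¹ ^ 6 := (pow_succ _ _).symm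
    have hlog := log_le_log (by positivity) hsix
    rw [log_pow, log_pow] at hlog
    push_cast at hlog ⊢
    nlinarith [log_two_gt_d9]

end Recovery

/-- Theorem 1 of the paper: there is `c > 0` such that for all `d ∈ ℕ`
(`d ≥ 1`) and `ε ∈ (0, 1/2)`, the complexity of `L₂`-approximation on `F_d^log` satisfies
`n(ε, F_d^log, L₂) ≤ c d ε⁻³ log³(ε⁻¹)`: there are `n` points in the cube and a (possibly
non-linear) recovery map `φ` with worst-case `L₂`-error at most `ε` on `F_d^log`. -/
theorem statement0 :
    ∃ c : ℝ, 0 < c ∧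
      ∀ (d : ℕ) (ε : ℝ), 1 ≤ d → ε ∈ Set.Ioo (0 : ℝ) (1/2) →
        ∃ n : ℕ, (n : ℝ) ≤ c * d * ε⁻¹ ^ 3 * Real.log ε⁻¹ ^ 3 ∧
          ∃ (x : Fin n → (Fin d → ℝ)) (φ : (Fin n → ℂ) → ((Fin d → ℝ) → ℂ)),
            (∀ i, x i ∈ cube d) ∧
            ∀ f ∈ FdLog d,
              eLpNorm (fun t => f t - φ (fun i => f (x i)) t) 2 (volume.restrict (cube d))
                ≤ ENNReal.ofReal ε := by
  refine ⟨36000 * 9 ^ 3 * 20 ^ 3, by norm_num, fun d ε hd hε => ?_⟩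
  obtain ⟨L, hL, herror, hpow, hlog⟩ := exists_dyadic_scale hε
  obtain ⟨x, hx⟩ := FdLog.exists_points_eLpNorm_sub_le hd hL
  have hcount : ((L * (36000 * d * L ^ 2 * 8 ^ L) : ℕ) : ℝ) ≤
      36000 * 9 ^ 3 * 20 ^ 3 * d * ε⁻¹ ^ 3 * log ε⁻¹ ^ 3 :=
    calc ((L * (36000 * d * L ^ 2 * 8 ^ L) : ℕ) : ℝ)
        = 36000 * d * (L : ℝ) ^ 3 * (2 ^ L) ^ 3 := by
          rw [← pow_mul, mul_comm L 3, pow_mul]; push_cast; ring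
      _ ≤ 36000 * d * (9 * log ε⁻¹) ^ 3 * (20 * ε⁻¹) ^ 3 := by
          have := (Nat.cast_nonneg L).trans hlog
          gcongr
      _ = _ := by ring
  let φ := Function.invFunOn (fun (g : (Fin d → ℝ) → ℂ) i => g (x i)) (FdLog d)
  refine ⟨_, hcount, fun i => x i, φ, fun i => (x i).2, fun f hf => ?_⟩
  have hsample : ∃ g ∈ FdLog d, (fun i => g (x i)) = fun i => f (x i) := ⟨f, hf, rfl⟩
  refine (hx f hf _ (Function.invFunOn_mem hsample) fun i => ?_).trans
    (ENNReal.ofReal_le_ofReal herror)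
  exact (congrFun (Function.invFunOn_eq hsample) i).symm
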